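/- Let M be a 6×6 real symplectic matrix whose characteristic polynomial is divisible by (X−1)². If Δ = (a−2)² − 4(b−2a+1) > 0 and some root T of q(s) = s² − (a−2)s + (b−2a+1) satisfies |T| > 2, then the characteristic polynomial of M has a real root λ with |λ| > 1; in particular M has an eigenvalue off the unit circle. -/

import Mathlib

open Polynomial

/-- The standard `6 × 6` symplectic matrix `[[0, I₃], [-I₃, 0]]`. -/
def J6 : Matrix (Fin 6) (Fin 6) ℝ :=
  Matrix.of fun i j => if (j : ℕ) = (i : ℕ) + 3 then 1 else if (i : ℕ) = (j : ℕ) + 3 then -1 else 0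

/-!
A matrix `A` preserving a nondegenerate bilinear form `B` satisfies `AᵀB(1 - XA) = -(X - Aᵀ)B`, so
its characteristic polynomial agrees with its reverse up to the factor `± det A`. When that factor
is `1`, the size is `6` and `1` is an eigenvalue, the characteristic polynomial is
`(X - 1)² X² q(X + X⁻¹)`, so each root `T` of `q` contributes a factor `X² - TX + 1`. Its roots
have sum `T` and product `1`; if `|T| > 2` they lie in the field and one of them has absolute value
greater than `1`.
-/

section Isometry

open Matrix

variable {n R : Type*} [Fintype n] [DecidableEq n] [CommRing R] {A B : Matrix n n R}

theorem charpoly_eq_neg_one_pow_mul_det_mul_reverse (hB : IsUnit B) (hA : Aᵀ * B * A = B) :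
    A.charpoly = (-1) ^ Fintype.card n * C A.det * A.charpoly.reverse := by
  have hdetB : IsUnit (C B.det) := ((isUnit_iff_isUnit_det B).1 hB).map C
  have intertwine : (Aᵀ * B).map C * ((1 : Matrix n n R[X]) - (X : R[X]) • A.map C) =
      -(Aᵀ.charmatrix * B.map C) := by
    rw [charmatrix, mul_sub, sub_mul, mul_smul_comm, ← Matrix.map_mul, hA]
    simp [scalar_apply, ← smul_eq_diagonal_mul, RingHom.mapMatrix_apply, ← Matrix.map_mul]
  have hdet : C (A.det * B.det) * A.charpolyRev =
      (-1) ^ Fintype.card n * (A.charpoly * C B.det) := by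
    rw [charpolyRev, ← charpoly_transpose A, charpoly]
    simpa [det_neg, ← RingHom.mapMatrix_apply, ← RingHom.map_det] using
      congrArg Matrix.det intertwine
  have hsign : (-1 : R[X]) ^ Fintype.card n * (-1) ^ Fintype.card n = 1 := by
    rw [← mul_pow, neg_one_mul, neg_neg, one_pow]
  refine hdetB.mul_right_cancel ?_
  rw [C_mul] at hdet
  rw [reverse_charpoly]
  linear_combination -(-1 : R[X]) ^ Fintype.card n * hdet - A.charpoly * C B.det * hsign

theorem reverse_charpoly_eq_self_of_det_eq_one (hn : Even (Fintype.card n)) (hB : IsUnit B)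
    (hA : Aᵀ * B * A = B) (hdet : A.det = 1) : A.charpoly.reverse = A.charpoly := by
  simpa [hn.neg_one_pow, hdet] using (charpoly_eq_neg_one_pow_mul_det_mul_reverse hB hA).symm

end Isometry

section SecondCoefficient

theorem sum_powersetCard_two {ι N : Type*} [LinearOrder ι] [AddCommMonoid N] (s : Finset ι)
    (f : Finset ι → N) :
    ∑ t ∈ s.powersetCard 2, f t = ∑ p ∈ s ×ˢ s with p.1 < p.2, f {p.1, p.2} := by
  refine (Finset.sum_nbij (fun p : ι × ι ↦ {p.1, p.2}) ?_ ?_ ?_ fun _ _ ↦ rfl).symm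
  · simp +contextual [Finset.insert_subset_iff, LT.lt.ne]
  · rintro ⟨i, j⟩ hij ⟨k, l⟩ hkl heq
    rw [Finset.mem_coe, Finset.mem_filter] at hij hkl
    have hpair : ({i, j} : Set ι) = {k, l} := by simpa using congrArg (SetLike.coe (B := ι)) heq
    obtain ⟨rfl, rfl⟩ | ⟨rfl, rfl⟩ := Set.pair_eq_pair_iff.1 hpair
    · rfl
    · exact absurd hij.2 hkl.2.asymm
  · intro t ht
    obtain ⟨hts, hcard⟩ := Finset.mem_powersetCard.1 ht
    obtain ⟨i, j, hij, rfl⟩ := Finset.card_eq_two.1 hcard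
    obtain ⟨hi, hj⟩ := Finset.insert_subset_iff.1 hts
    rw [Finset.singleton_subset_iff] at hj
    obtain hlt | hlt := hij.lt_or_gt
    · exact ⟨(i, j), by simp [hi, hj, hlt], rfl⟩
    · exact ⟨(j, i), by simp [hi, hj, hlt], Finset.pair_comm j i⟩

theorem det_submatrix_pair {n R : Type*} [DecidableEq n] [CommRing R] (A : Matrix n n R)
    {i j : n} (hij : i ≠ j) :
    (A.submatrix (Subtype.val : ({i, j} : Finset n) → n) Subtype.val).det =
      A i i * A j j - A i j * A j i := by
  let e : Fin 2 ≃ ({i, j} : Finset n) := Equiv.ofBijective ![⟨i, by simp⟩, ⟨j, by simp⟩] <| by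
    rw [Fintype.bijective_iff_injective_and_card]
    exact ⟨by simp [Function.Injective, Fin.forall_fin_two, hij, hij.symm], by simp [hij]⟩
  rw [← Matrix.det_submatrix_equiv_self e, Matrix.det_fin_two]
  simp [e]

theorem charpoly_coeff_card_sub_two {n R : Type*} [Fintype n] [LinearOrder n] [CommRing R]
    (A : Matrix n n R) (hn : 2 ≤ Fintype.card n) :
    A.charpoly.coeff (Fintype.card n - 2) =
      ∑ i, ∑ j, if i < j then A i i * A j j - A i j * A j i else 0 := by
  rw [A.charpoly_coeff_eq_sum_minors 2 hn, even_two.neg_one_pow, one_mul, sum_powersetCard_two,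
    Finset.univ_product_univ, ← Fintype.sum_prod_type', ← Finset.sum_filter]
  exact Finset.sum_congr rfl fun p hp ↦ det_submatrix_pair A (Finset.mem_filter.1 hp).2.ne

end SecondCoefficient

section ReciprocalSextic

variable {R : Type*} [CommRing R] {p : R[X]}

theorem coeff_natDegree_sub_of_reverse_eq_self (hrev : p.reverse = p) {k : ℕ}
    (hk : k ≤ p.natDegree) : p.coeff (p.natDegree - k) = p.coeff k := by
  rw [← revAt_le hk, ← coeff_reverse, hrev]

theorem reciprocal_sextic_eq_of_isRoot_one (hmonic : p.Monic) (hdeg : p.natDegree = 6)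
    (hrev : p.reverse = p) (hroot : p.IsRoot 1) :
    p = (X - 1) ^ 2 * ((X ^ 2 + 1) ^ 2 + C (p.coeff 5 + 2) * X * (X ^ 2 + 1) +
      C (p.coeff 4 + 2 * p.coeff 5 + 1) * X ^ 2) := by
  have hsymm (k : ℕ) (hk : k ≤ 6) : p.coeff (6 - k) = p.coeff k :=
    hdeg ▸ coeff_natDegree_sub_of_reverse_eq_self hrev (hk.trans hdeg.ge)
  have h₆ : p.coeff 6 = 1 := hdeg ▸ hmonic.coeff_natDegree
  have h₀ : p.coeff 0 = 1 := (hsymm 0 (by norm_num)).symm.trans h₆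
  have h₁ : p.coeff 1 = p.coeff 5 := (hsymm 1 (by norm_num)).symm
  have h₂ : p.coeff 2 = p.coeff 4 := (hsymm 2 (by norm_num)).symm
  have h₃ : p.coeff 3 = -(2 + 2 * p.coeff 5 + 2 * p.coeff 4) := by
    have hsum : ∑ k ∈ Finset.range 7, p.coeff k = 0 := by
      simpa [eval_eq_sum_range, hdeg] using hroot.eq_zero
    simp only [Finset.sum_range_succ, Finset.sum_range_zero, h₀, h₁, h₂, h₆] at hsum
    linear_combination hsum
  conv_lhs => rw [p.as_sum_range_C_mul_X_pow, hdeg]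
  simp only [Finset.sum_range_succ, Finset.sum_range_zero, h₀, h₁, h₂, h₃, h₆, map_add, map_mul,
    map_neg, map_one, map_ofNat]
  ring

theorem X_sq_sub_C_mul_X_add_one_dvd_reciprocal_sextic (hmonic : p.Monic) (hdeg : p.natDegree = 6)
    (hrev : p.reverse = p) (hroot : p.IsRoot 1) {T : R}
    (hT : T ^ 2 + (p.coeff 5 + 2) * T + (p.coeff 4 + 2 * p.coeff 5 + 1) = 0) :
    X ^ 2 - C T * X + 1 ∣ p := by
  have hCT := congrArg C hT
  simp only [map_add, map_mul, map_pow, map_one, map_ofNat, map_zero] at hCT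
  refine ⟨(X - 1) ^ 2 * (X ^ 2 + C (T + p.coeff 5 + 2) * X + 1),
    (reciprocal_sextic_eq_of_isRoot_one hmonic hdeg hrev hroot).trans ?_⟩
  simp only [map_add, map_mul, map_one, map_ofNat]
  linear_combination (X - 1) ^ 2 * X ^ 2 * hCT

end ReciprocalSextic

section OrderedField

open Matrix

variable {K : Type*} [Field K] [LinearOrder K] [IsStrictOrderedRing K]

theorem exists_sq_sub_mul_add_one_eq_zero_one_lt_abs {T : K} (hsq : IsSquare (T ^ 2 - 4))
    (hT : 2 < |T|) : ∃ x : K, x ^ 2 - T * x + 1 = 0 ∧ 1 < |x| := by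
  obtain ⟨s, hs⟩ := hsq
  have hdiscrim : discrim 1 (-T) 1 = s * s := by
    rw [discrim, ← hs]
    ring
  obtain ⟨x, hx⟩ := exists_quadratic_eq_zero one_ne_zero ⟨s, hdiscrim⟩
  obtain h | h : 1 < |x| ∨ 1 < |T - x| := by
    by_contra! h
    linarith [abs_add_le x (T - x), congrArg abs (add_sub_cancel x T)]
  · exact ⟨x, by linear_combination hx, h⟩
  · exact ⟨T - x, by linear_combination hx, h⟩

theorem instability_criterion_general {n : Type*} [Fintype n] [LinearOrder n]
    (hn : Fintype.card n = 6) (hsqrt : ∀ x : K, 0 ≤ x → IsSquare x) {M Ω : Matrix n n K}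
    (hΩ : IsUnit Ω) (hM : Mᵀ * Ω * M = Ω) (hdet : M.det = 1) (hroot : M.charpoly.IsRoot 1)
    {a b : K} (ha : a = M.trace)
    (hb : b = ∑ i, ∑ j, if i < j then M i i * M j j - M i j * M j i else 0)
    (hT : ∃ T : K, T ^ 2 - (a - 2) * T + (b - 2 * a + 1) = 0 ∧ |T| > 2) :
    ∃ lam : K, M.charpoly.IsRoot lam ∧ |lam| > 1 := by
  obtain ⟨T, hq, habs⟩ := hT
  have : Nonempty n := Fintype.card_pos_iff.1 (by lia)
  have hrev : M.charpoly.reverse = M.charpoly :=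
    reverse_charpoly_eq_self_of_det_eq_one (by grind) hΩ hM hdet
  have h₅ : M.charpoly.coeff 5 = -a := by
    rw [ha, M.trace_eq_neg_charpoly_coeff, hn, neg_neg]
  have h₄ : M.charpoly.coeff 4 = b := by
    rw [hb, ← charpoly_coeff_card_sub_two M (by lia), hn]
  have hdvd : X ^ 2 - C T * X + 1 ∣ M.charpoly :=
    X_sq_sub_C_mul_X_add_one_dvd_reciprocal_sextic M.charpoly_monic
      (M.charpoly_natDegree_eq_dim.trans hn) hrev hroot
      (by rw [h₅, h₄]; linear_combination hq)
  have hdiscrim : 0 ≤ T ^ 2 - 4 := by nlinarith [sq_abs T]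
  obtain ⟨x, hx, hx_abs⟩ := exists_sq_sub_mul_add_one_eq_zero_one_lt_abs (hsqrt _ hdiscrim) habs
  exact ⟨x, IsRoot.dvd (by simpa using hx) hdvd, hx_abs⟩

end OrderedField

section StandardForm

open Matrix

/-- The splitting of the six coordinates into two blocks of three, through which `J6` is compared
with `Matrix.J (Fin 3) ℝ`. -/
def blockEquiv : Fin 3 ⊕ Fin 3 ≃ Fin 6 := finSumFinEquiv

theorem J6_submatrix_blockEquiv : J6.submatrix blockEquiv blockEquiv = -J (Fin 3) ℝ := by
  have hinl (i : Fin 3) : (blockEquiv (.inl i) : ℕ) = i := rfl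
  have hinr (i : Fin 3) : (blockEquiv (.inr i) : ℕ) = 3 + i := rfl
  ext (i | i) (j | j) <;>
    simp only [J6, J, submatrix_apply, of_apply, hinl, hinr, Matrix.neg_apply, fromBlocks_apply₁₁,
      fromBlocks_apply₁₂, fromBlocks_apply₂₁, fromBlocks_apply₂₂, Matrix.zero_apply,
      Matrix.one_apply, Fin.ext_iff] <;>
    grind

theorem isUnit_J6 : IsUnit J6 := by
  rw [isUnit_iff_isUnit_det, ← det_submatrix_equiv_self blockEquiv, J6_submatrix_blockEquiv,
    ← isUnit_iff_isUnit_det, IsUnit.neg_iff, isUnit_iff_isUnit_det]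
  exact isUnit_det_J _ _

theorem det_eq_one_of_transpose_mul_J6_mul {M : Matrix (Fin 6) (Fin 6) ℝ}
    (hM : Mᵀ * J6 * M = J6) : M.det = 1 := by
  have hmem : M.submatrix blockEquiv blockEquiv ∈ symplecticGroup (Fin 3) ℝ := by
    rw [SymplecticGroup.mem_iff', ← neg_inj, ← J6_submatrix_blockEquiv]
    have hblock := congrArg (fun N ↦ N.submatrix blockEquiv blockEquiv) hM
    simpa [← submatrix_mul_equiv _ _ _ blockEquiv _, J6_submatrix_blockEquiv,
      transpose_submatrix] using hblock
  rw [← det_submatrix_equiv_self blockEquiv, SymplecticGroup.det_eq_one hmem]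

end StandardForm

/-- If a `6 × 6` real symplectic matrix `M` has characteristic polynomial divisible by
`(X - 1)²`, `Δ = (a-2)² - 4(b-2a+1) > 0` and some root `T` of
`q(s) = s² - (a-2)s + (b-2a+1)` satisfies `|T| > 2`, then the characteristic polynomial of
`M` has a real root `λ` with `|λ| > 1`; in particular `M` has an eigenvalue off the unit
circle. -/
theorem instability_criterion
    (M : Matrix (Fin 6) (Fin 6) ℝ)
    (hsymp : M.transpose * J6 * M = J6)
    (hdvd : (X - 1) ^ 2 ∣ M.charpoly)
    (a b : ℝ)
    (ha : a = Matrix.trace M)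
    (hb : b = ∑ i : Fin 6, ∑ j : Fin 6,
      if i < j then M i i * M j j - M i j * M j i else 0)
    (hΔ : (a - 2) ^ 2 - 4 * (b - 2 * a + 1) > 0)
    (hT : ∃ T : ℝ, T ^ 2 - (a - 2) * T + (b - 2 * a + 1) = 0 ∧ |T| > 2) :
    ∃ lam : ℝ, M.charpoly.IsRoot lam ∧ |lam| > 1 := by
  have hroot : M.charpoly.IsRoot 1 :=
    dvd_iff_isRoot.1 ((dvd_pow_self (X - C 1) two_ne_zero).trans (by simpa using hdvd))
  exact instability_criterion_general (by simp) (fun _ ↦ Real.isSquare_iff.2) isUnit_J6 hsymp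
    (det_eq_one_of_transpose_mul_J6_mul hsymp) hroot ha hb hT
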